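/- arXiv:2105.03286 — 2 statements merged into one kernel-verified Lean document; each statement's English description precedes it below -/
import Mathlib

section
/- Let (X,r) be a set-theoretic YBE solution, (F,Φ,Ψ) a Drinfeld twist on (X,r), and (G,φ,ψ) a Drinfeld twist on the twisted solution (X, F∘r∘F⁻¹). Then the triple (G∘F, F₂₃⁻¹∘φ∘F₂₃∘Φ, F₁₂⁻¹∘ψ∘F₁₂∘Ψ) is a Drinfeld twist on (X,r). -/
namespace YBETwist

/-- Apply a map on `X × X` to the factors 1,2 of a triple: `f₁₂ = f × id`. -/
def E12 {X : Type*} (f : (X × X) ≃ (X × X)) : (X × X × X) ≃ (X × X × X) :=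
  ((Equiv.prodAssoc X X X).symm.trans (f.prodCongr (Equiv.refl X))).trans
    (Equiv.prodAssoc X X X)

/-- Apply a map on `X × X` to the factors 2,3 of a triple: `f₂₃ = id × f`. -/
def E23 {X : Type*} (f : (X × X) ≃ (X × X)) : (X × X × X) ≃ (X × X × X) :=
  (Equiv.refl X).prodCongr f

/-- The braid relation `r₂₃ ∘ r₁₂ ∘ r₂₃ = r₁₂ ∘ r₂₃ ∘ r₁₂`; a set-theoretic YBE solution is a
bijection `r : X² → X²` satisfying it. -/
def IsBraided {X : Type*} (r : (X × X) ≃ (X × X)) : Prop :=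
  ∀ p : X × X × X, E23 r (E12 r (E23 r p)) = E12 r (E23 r (E12 r p))

/-- A Drinfeld twist `(F, Φ, Ψ)` on a set-theoretic YBE solution `(X, r)`. -/
structure IsTwist {X : Type*} (r F : (X × X) ≃ (X × X))
    (Φ Ψ : (X × X × X) ≃ (X × X × X)) : Prop where
  t1 : ∀ p, E12 F (Ψ p) = E23 F (Φ p)
  t2 : ∀ p, Φ (E23 r p) = E23 r (Φ p)
  t3 : ∀ p, Ψ (E12 r p) = E12 r (Ψ p)

/-- The twisted map `F ∘ r ∘ F⁻¹`. -/
def twisted {X : Type*} (r F : (X × X) ≃ (X × X)) : (X × X) ≃ (X × X) :=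
  (F.symm.trans r).trans F

theorem E12_trans_apply {X : Type*} (F G : (X × X) ≃ (X × X)) (p : X × X × X) :
    E12 (F.trans G) p = E12 G (E12 F p) := rfl

theorem E23_trans_apply {X : Type*} (F G : (X × X) ≃ (X × X)) (p : X × X × X) :
    E23 (F.trans G) p = E23 G (E23 F p) := rfl

/-- `F₁₂` intertwines `r₁₂` with the twisted map. -/
theorem E12_twisted_apply {X : Type*} (r F : (X × X) ≃ (X × X)) (p : X × X × X) :
    E12 (twisted r F) (E12 F p) = E12 F (E12 r p) := by
  simp [E12, twisted]

/-- `F₂₃` intertwines `r₂₃` with the twisted map. -/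
theorem E23_twisted_apply {X : Type*} (r F : (X × X) ≃ (X × X)) (p : X × X × X) :
    E23 (twisted r F) (E23 F p) = E23 F (E23 r p) := by
  simp [E23, twisted, Prod.map]

theorem comp_of_twists_is_twist {X : Type*} (r F G : (X × X) ≃ (X × X))
    (Φ Ψ φ ψ : (X × X × X) ≃ (X × X × X))
    (hr : IsBraided r) (ht : IsTwist r F Φ Ψ)
    (ht' : IsTwist (twisted r F) G φ ψ) :
    IsTwist r (F.trans G)
      (((Φ.trans (E23 F)).trans φ).trans (E23 F).symm)
      (((Ψ.trans (E12 F)).trans ψ).trans (E12 F).symm) := by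
  refine ⟨fun p => ?_, fun p => ?_, fun p => ?_⟩
  · simp only [Equiv.trans_apply, E12_trans_apply, E23_trans_apply, Equiv.apply_symm_apply]
    rw [ht.t1, ht'.t1]
  · simp only [Equiv.trans_apply]
    rw [Equiv.symm_apply_eq, ht.t2, ← E23_twisted_apply, ht'.t2, ← E23_twisted_apply,
      Equiv.apply_symm_apply]
  · simp only [Equiv.trans_apply]
    rw [Equiv.symm_apply_eq, ht.t3, ← E12_twisted_apply, ht'.t3, ← E12_twisted_apply,
      Equiv.apply_symm_apply]

end YBETwist
end

section
/- Let (G,·,e) be a group with braiding operator r and (F,Φ,Ψ) a Drinfeld twist on (G,·,e,r). Then (F⁻¹, F₂₃∘Φ⁻¹∘F₂₃⁻¹, F₁₂∘Ψ⁻¹∘F₁₂⁻¹) is a Drinfeld twist on the twisted group with braiding operator (G, m∘F⁻¹, e, F∘r∘F⁻¹), and twisting by this triple recovers the original structure: (m∘F⁻¹)∘(F⁻¹)⁻¹ = m and F⁻¹∘(F∘r∘F⁻¹)∘F = r. -/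
namespace BraceTwist

/-- Apply a map on `G × G` to the factors 1,2 of a triple: `f₁₂ = f × id`. -/
def E12 {G : Type*} (f : (G × G) ≃ (G × G)) : (G × G × G) ≃ (G × G × G) :=
  ((Equiv.prodAssoc G G G).symm.trans (f.prodCongr (Equiv.refl G))).trans
    (Equiv.prodAssoc G G G)

/-- Apply a map on `G × G` to the factors 2,3 of a triple: `f₂₃ = id × f`. -/
def E23 {G : Type*} (f : (G × G) ≃ (G × G)) : (G × G × G) ≃ (G × G × G) :=
  (Equiv.refl G).prodCongr f

/-- `m₁₂ : G³ → G²`, multiplying the first two factors. -/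
def M12 {G : Type*} (mul : G → G → G) : G × G × G → G × G :=
  fun p => (mul p.1 p.2.1, p.2.2)

/-- `m₂₃ : G³ → G²`, multiplying the last two factors. -/
def M23 {G : Type*} (mul : G → G → G) : G × G × G → G × G :=
  fun p => (p.1, mul p.2.1 p.2.2)

/-- `(mul, e, inv)` is a group structure on `G`. -/
structure IsGroup {G : Type*} (mul : G → G → G) (e : G) (inv : G → G) : Prop where
  mul_assoc : ∀ a b c, mul (mul a b) c = mul a (mul b c)
  one_mul : ∀ a, mul e a = a
  mul_one : ∀ a, mul a e = a
  inv_mul : ∀ a, mul (inv a) a = e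
  mul_inv : ∀ a, mul a (inv a) = e

/-- `r` is a braiding operator on the group `(G, mul, e)`. -/
structure IsBraidingOp {G : Type*} (mul : G → G → G) (e : G)
    (r : (G × G) ≃ (G × G)) : Prop where
  unit_left : ∀ g, r (e, g) = (g, e)
  unit_right : ∀ g, r (g, e) = (e, g)
  br1 : ∀ p : G × G × G, r (M12 mul p) = M23 mul (E12 r (E23 r p))
  br2 : ∀ p : G × G × G, r (M23 mul p) = M12 mul (E23 r (E12 r p))
  mul_r : ∀ p : G × G, mul (r p).1 (r p).2 = mul p.1 p.2

/-- A Drinfeld twist `(F, Φ, Ψ)` on the group with braiding operator `(G, mul, e, r)`. -/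
structure IsGrpTwist {G : Type*} (mul : G → G → G) (e : G)
    (r F : (G × G) ≃ (G × G)) (Φ Ψ : (G × G × G) ≃ (G × G × G)) : Prop where
  t1 : ∀ p, E12 F (Ψ p) = E23 F (Φ p)
  t2 : ∀ p, Φ (E23 r p) = E23 r (Φ p)
  t3 : ∀ p, Ψ (E12 r p) = E12 r (Ψ p)
  g1a : ∀ x y, Ψ (x, y, e) = (x, y, e)
  g1b : ∀ x y, Φ (e, x, y) = (e, x, y)
  g2a : ∀ x, F (e, x) = (e, x)
  g2b : ∀ x, F (x, e) = (x, e)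
  g3 : ∀ p : G × G × G, M23 mul (Φ p) = F (M23 mul p)
  g4 : ∀ p : G × G × G, M12 mul (Ψ p) = F (M12 mul p)

/-- The twisted map `F ∘ r ∘ F⁻¹`. -/
def twisted {G : Type*} (r F : (G × G) ≃ (G × G)) : (G × G) ≃ (G × G) :=
  (F.symm.trans r).trans F

/-- The twisted multiplication `m ∘ F⁻¹`. -/
def twistMul {G : Type*} (mul : G → G → G) (F : (G × G) ≃ (G × G)) : G → G → G :=
  fun x y => mul (F.symm (x, y)).1 (F.symm (x, y)).2

section

variable {G : Type*} (f g : (G × G) ≃ (G × G)) (mul : G → G → G)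

theorem E12_symm (p : G × G × G) : E12 f.symm p = (E12 f).symm p := rfl

theorem E23_symm (p : G × G × G) : E23 f.symm p = (E23 f).symm p := rfl

theorem E12_twisted (p : G × G × G) :
    E12 (twisted g f) p = E12 f (E12 g ((E12 f).symm p)) := rfl

theorem E23_twisted (p : G × G × G) :
    E23 (twisted g f) p = E23 f (E23 g ((E23 f).symm p)) := rfl

theorem twistMul_apply (p : G × G) : twistMul mul f (f p).1 (f p).2 = mul p.1 p.2 := by
  simp [twistMul]

theorem M12_twistMul_E12 (p : G × G × G) : M12 (twistMul mul f) (E12 f p) = M12 mul p :=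
  Prod.ext (twistMul_apply f mul (p.1, p.2.1)) rfl

theorem M23_twistMul_E23 (p : G × G × G) : M23 (twistMul mul f) (E23 f p) = M23 mul p :=
  Prod.ext rfl (twistMul_apply f mul p.2)

end

theorem inverse_grp_twist {G : Type*} (mul : G → G → G) (e : G) (inv : G → G)
    (hG : IsGroup mul e inv)
    (r F : (G × G) ≃ (G × G)) (Φ Ψ : (G × G × G) ≃ (G × G × G))
    (hr : IsBraidingOp mul e r) (ht : IsGrpTwist mul e r F Φ Ψ) :
    IsGrpTwist (twistMul mul F) e (twisted r F) F.symm
      (((E23 F).symm.trans Φ.symm).trans (E23 F))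
      (((E12 F).symm.trans Ψ.symm).trans (E12 F)) ∧
    (∀ p : G × G, twistMul mul F (F p).1 (F p).2 = mul p.1 p.2) ∧
    (∀ p : G × G, F.symm (twisted r F (F p)) = r p) := by
  refine ⟨⟨fun p => ?_, fun p => ?_, fun p => ?_, fun x y => ?_, fun x y => ?_, fun x => ?_,
    fun x => ?_, fun p => ?_, fun p => ?_⟩, twistMul_apply F mul, fun p => by simp [twisted]⟩
  · simp only [Equiv.trans_apply, E12_symm, E23_symm, Equiv.symm_apply_apply]
    rw [Equiv.symm_apply_eq, Equiv.symm_apply_eq, ht.t1, Equiv.apply_symm_apply,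
      Equiv.apply_symm_apply]
  · simp only [Equiv.trans_apply, E23_twisted, Equiv.symm_apply_apply]
    rw [EmbeddingLike.apply_eq_iff_eq, Equiv.symm_apply_eq, ht.t2, Equiv.apply_symm_apply]
  · simp only [Equiv.trans_apply, E12_twisted, Equiv.symm_apply_apply]
    rw [EmbeddingLike.apply_eq_iff_eq, Equiv.symm_apply_eq, ht.t3, Equiv.apply_symm_apply]
  · have hE : (E12 F).symm (x, y, e) = ((F.symm (x, y)).1, (F.symm (x, y)).2, e) := rfl
    have hΨ : Ψ.symm ((F.symm (x, y)).1, (F.symm (x, y)).2, e) = (E12 F).symm (x, y, e) := by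
      rw [Equiv.symm_apply_eq, hE, ht.g1a]
    rw [Equiv.trans_apply, Equiv.trans_apply, hE, hΨ, Equiv.apply_symm_apply]
  · have hE : (E23 F).symm (e, x, y) = (e, (F.symm (x, y)).1, (F.symm (x, y)).2) := rfl
    have hΦ : Φ.symm (e, (F.symm (x, y)).1, (F.symm (x, y)).2) = (E23 F).symm (e, x, y) := by
      rw [Equiv.symm_apply_eq, hE, ht.g1b]
    rw [Equiv.trans_apply, Equiv.trans_apply, hE, hΦ, Equiv.apply_symm_apply]
  · rw [Equiv.symm_apply_eq, ht.g2a]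
  · rw [Equiv.symm_apply_eq, ht.g2b]
  · obtain ⟨q, rfl⟩ := (E23 F).surjective p
    obtain ⟨q, rfl⟩ := Φ.surjective q
    simp only [Equiv.trans_apply, Equiv.symm_apply_apply, M23_twistMul_E23, ht.g3]
  · obtain ⟨q, rfl⟩ := (E12 F).surjective p
    obtain ⟨q, rfl⟩ := Ψ.surjective q
    simp only [Equiv.trans_apply, Equiv.symm_apply_apply, M12_twistMul_E12, ht.g4]

end BraceTwist
end
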